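/- Let M be a metric space, R a ring, and let (F_m)_{m∈M} and (G_m)_{m∈M} be families of R-modules. Let φ : ⨁_{m∈M} F_m → ⨁_{n∈M} G_n be an R-linear homomorphism and b ≥ 0 a real number. Then the following are equivalent: (1) for all m, n ∈ M with d(m,n) > b, the component of φ from F_m to G_n (the composite of the inclusion of F_m, φ, and the projection onto G_n) is zero; (2) for every subset S ⊆ M, φ maps the submodule F(S) of elements supported in S into the submodule G(S[b]) of elements supported in S[b] = { n ∈ M : inf_{m∈S} d(n,m) ≤ b }. -/

import Mathlib

/-!
An element of the direct sum is the finite sum of its homogeneous components, so by linearity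
`φ x n` is the sum of the images of the `x m` under the components `F m → G n` of `φ`. If `x` is
supported in `S` and `n` is outside `S[b]`, every `m ∈ S` has `d(m,n) > b`, so each summand
vanishes. Conversely, the bound on the components is the support condition for the singletons
`S = {m}`.
-/

open DirectSum

/-- For an `R`-linear map `φ : ⨁_{m∈M} F_m → ⨁_{n∈M} G_n` over a metric space `M` and a
bound `b ≥ 0`, the following are equivalent: (1) all components `F_m → G_n` with
`d(m,n) > b` vanish; (2) for every subset `S ⊆ M`, `φ` maps elements supported in `S` to
elements supported in the `b`-enlargement `S[b] = {n | infEdist n S ≤ b}`. -/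
theorem bounded_components_iff_enlargement_support
    {M : Type*} [MetricSpace M] [DecidableEq M]
    {R : Type*} [Ring R]
    (F G : M → Type*)
    [∀ m, AddCommGroup (F m)] [∀ m, Module R (F m)]
    [∀ m, AddCommGroup (G m)] [∀ m, Module R (G m)]
    (φ : (⨁ m, F m) →ₗ[R] ⨁ n, G n) (b : ℝ) (hb : 0 ≤ b) :
    (∀ m n : M, b < dist m n →
        (DirectSum.component R M G n).comp (φ.comp (DirectSum.lof R M F m)) = 0) ↔
    (∀ (S : Set M) (x : ⨁ m, F m), (∀ m : M, m ∉ S → x m = 0) →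
        ∀ n : M, ¬ EMetric.infEdist n S ≤ ENNReal.ofReal b → φ x n = 0) := by
  constructor
  · intro h S x hx n hn
    classical
    -- If `m ∈ S` and `n ∉ S[b]` then `d(m,n) > b`; if `m ∉ S` then `x m = 0`.
    have key : ∀ m, φ (DirectSum.of F m (x m)) n = 0 := by
      intro m
      by_cases hm : m ∈ S
      · have hd : b < dist m n := by
          by_contra hle
          refine hn ((Metric.infEDist_le_edist_of_mem hm).trans ?_)
          rw [edist_comm, edist_dist]
          exact ENNReal.ofReal_le_ofReal (not_lt.mp hle)
        exact LinearMap.congr_fun (h m n hd) (x m)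
      · rw [hx m hm, map_zero, map_zero, DirectSum.zero_apply]
    rw [← DirectSum.sum_support_of x, map_sum, DFinsupp.finsetSum_apply]
    exact Finset.sum_eq_zero fun m _ => key m
  · intro h m n hmn
    ext y
    -- Condition (2) for `S = {m}`: the enlargement `{m}[b]` is the closed ball about `m`.
    refine h {m} (DirectSum.lof R M F m y) (fun k hk => ?_) n ?_
    · exact DirectSum.of_eq_of_ne m k y (fun e => hk e)
    · change ¬ Metric.infEDist n {m} ≤ ENNReal.ofReal b
      rw [Metric.infEDist_singleton, edist_comm, edist_dist, not_le]
      exact (ENNReal.ofReal_lt_ofReal_iff_of_nonneg hb).mpr hmn
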